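/- arXiv:2501.13668 — 2 statements merged into one kernel-verified Lean document; each statement's English description precedes it below -/
import Mathlib

section
/- If the neighborhood structure 𝒩 is nontrivial, then the output map C has nontrivial kernel. Precisely: if for each subsystem q one chooses a traceless operator E_q on ℂ^{d_q}, then the operator E = E_1 ⊗ ⋯ ⊗ E_N satisfies tr(C_i E) = 0 for every i, hence C[E] = 0; choosing each E_q nonzero (possible since d_q ≥ 2) yields a nonzero element of ker C. -/
open Matrix
open scoped Classical

/-- A matrix on the multipartite space `⊗_q ℂ^{d q}` (indexed by tuples
`a : ∀ q, Fin (d q)`) is `S`-local, for a neighborhood `S ⊆ {1,…,N}`, if it has the form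
`X ⊗ I` with `X` acting on the factors in `S` and the identity on the complementary
factors. -/
def IsLocalOp {N : ℕ} {d : Fin N → ℕ} (S : Finset (Fin N))
    (M : Matrix (∀ q, Fin (d q)) (∀ q, Fin (d q)) ℂ) : Prop :=
  ∃ X : Matrix (∀ q : {q // q ∈ S}, Fin (d q)) (∀ q : {q // q ∈ S}, Fin (d q)) ℂ,
    ∀ a b : ∀ q, Fin (d q),
      M a b = if ∀ q ∉ S, a q = b q
        then X (fun q => a q) (fun q => b q) else 0

/-- The elementary tensor product operator `E₁ ⊗ ⋯ ⊗ E_N` on `⊗_q ℂ^{d q}`, built from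
operators `Efam q` on the factors `ℂ^{d q}`. -/
def tensorOp {N : ℕ} {d : Fin N → ℕ} (Efam : ∀ q, Matrix (Fin (d q)) (Fin (d q)) ℂ) :
    Matrix (∀ q, Fin (d q)) (∀ q, Fin (d q)) ℂ :=
  fun a b => ∏ q, Efam q (a q) (b q)

theorem trace_local_tensor_eq_zero {N : ℕ} {d : Fin N → ℕ} (hd : ∀ q, 2 ≤ d q)
    (S : Finset (Fin N)) (hS : S ≠ Finset.univ)
    (C : Matrix (∀ q, Fin (d q)) (∀ q, Fin (d q)) ℂ) (hC : IsLocalOp S C)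
    (Efam : ∀ q, Matrix (Fin (d q)) (Fin (d q)) ℂ)
    (htr : ∀ q, (Efam q).trace = 0) : (C * tensorOp Efam).trace = 0 := by
  obtain ⟨X, hX⟩ := hC
  obtain ⟨p, hp⟩ : ∃ p, p ∉ S := by
    by_contra! h
    exact hS (Finset.eq_univ_iff_forall.2 h)
  let e := (Equiv.piSplitAt p (fun q => Fin (d q))).symm
  have e1 : ∀ x r, e (x, r) p = x := by
    intro x r; simp [e]
  have e2 : ∀ x r q (h : q ≠ p), e (x, r) q = r ⟨q, h⟩ := by
    intro x r q h; simp [e, h]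
  let x0 : Fin (d p) := ⟨0, by have := hd p; omega⟩
  have hCe : ∀ x y r s, C (e (x, r)) (e (y, s))
      = if x = y then C (e (x0, r)) (e (x0, s)) else 0 := by
    intro x y r s
    have hr : ∀ x r, (fun q : {q // q ∈ S} => e (x, r) q)
        = fun q : {q // q ∈ S} => r ⟨q, fun h => hp (h ▸ q.2)⟩ := by
      intro x r; funext q; exact e2 _ _ _ _
    by_cases hxy : x = y
    · subst hxy
      rw [if_pos rfl, hX, hX, hr, hr, hr, hr]
      refine if_congr (forall₂_congr fun q _ => ?_) rfl rfl
      by_cases h : q = p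
      · subst h; rw [e1, e1, e1, e1]; simp
      · rw [e2 _ _ _ h, e2 _ _ _ h, e2 _ _ _ h, e2 _ _ _ h]
    · rw [if_neg hxy, hX, if_neg]
      intro h
      have := h p hp
      rw [e1, e1] at this
      exact hxy this
  have hE : ∀ x r s, tensorOp Efam (e (x, s)) (e (x, r))
      = Efam p x x * ∏ q ∈ Finset.univ.erase p, Efam q (e (x0, s) q) (e (x0, r) q) := by
    intro x r s
    unfold tensorOp
    rw [← Finset.mul_prod_erase Finset.univ _ (Finset.mem_univ p), e1, e1]
    congr 1
    refine Finset.prod_congr rfl fun q hq => ?_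
    have h := Finset.ne_of_mem_erase hq
    rw [e2 _ _ _ h, e2 _ _ _ h, e2 _ _ _ h, e2 _ _ _ h]
  have hsum : (C * tensorOp Efam).trace
      = ∑ a, ∑ b, C a b * tensorOp Efam b a := rfl
  rw [hsum, ← e.sum_comp]
  simp_rw [← e.sum_comp (fun b => C _ b * tensorOp Efam b _)]
  simp_rw [Fintype.sum_prod_type_right]
  refine Finset.sum_eq_zero fun r _ => ?_
  rw [Finset.sum_comm]
  refine Finset.sum_eq_zero fun s _ => ?_
  have hin : ∀ x, ∑ y, C (e (x, r)) (e (y, s)) * tensorOp Efam (e (y, s)) (e (x, r))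
      = C (e (x0, r)) (e (x0, s)) * (Efam p x x *
        ∏ q ∈ Finset.univ.erase p, Efam q (e (x0, s) q) (e (x0, r) q)) := by
    intro x
    rw [Finset.sum_eq_single x, hCe, if_pos rfl, hE]
    · intro y _ hy
      rw [hCe, if_neg (Ne.symm hy), zero_mul]
    · intro h; exact absurd (Finset.mem_univ x) h
  rw [Finset.sum_congr rfl fun x _ => hin x]
  rw [← Finset.mul_sum, ← Finset.sum_mul]
  have := htr p
  rw [Matrix.trace] at this
  simp only [Matrix.diag_apply] at this
  rw [this, zero_mul, mul_zero]

/-- Let `H = ⊗_{q=1}^N ℂ^{d_q}` with `N ≥ 2` and `d_q ≥ 2`, let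
`𝒩 = {S k}` be a nontrivial neighborhood structure (no `S k` is all of `{1,…,N}`), and let
`{C i}` be a family of `𝒩`-local, Hermitian, Hilbert–Schmidt orthonormal operators defining
the output map `C[ρ] = Σ_i tr(C_i ρ) • C_i`.  If for each subsystem `q` one chooses a
traceless operator `E_q` on `ℂ^{d_q}`, then `E = E₁ ⊗ ⋯ ⊗ E_N` satisfies `tr(C_i E) = 0`
for every `i`, hence `C[E] = 0`; choosing each `E_q` nonzero (possible since `d_q ≥ 2`)
yields a nonzero element of `ker C`. -/
theorem nontrivial_neighborhood_output_map_nontrivial_kernel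
    {N M : ℕ} {d : Fin N → ℕ} (hN : 2 ≤ N) (hd : ∀ q, 2 ≤ d q)
    (S : Fin M → Finset (Fin N)) (hnontriv : ∀ k, S k ≠ Finset.univ)
    {ι : Type*} [Fintype ι]
    (C : ι → Matrix (∀ q, Fin (d q)) (∀ q, Fin (d q)) ℂ)
    (hlocal : ∀ i, ∃ k, IsLocalOp (S k) (C i))
    (hherm : ∀ i, (C i).IsHermitian)
    (horth : ∀ i j, ((C i)ᴴ * C j).trace = if i = j then 1 else 0)
    (Efam : ∀ q, Matrix (Fin (d q)) (Fin (d q)) ℂ)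
    (htr : ∀ q, (Efam q).trace = 0) :
    (∀ i, (C i * tensorOp Efam).trace = 0) ∧
    (∑ i, ((C i * tensorOp Efam).trace) • C i = 0) ∧
    ((∀ q, Efam q ≠ 0) → tensorOp Efam ≠ 0) := by
  have h : ∀ i, (C i * tensorOp Efam).trace = 0 := by
    intro i
    obtain ⟨k, hk⟩ := hlocal i
    exact trace_local_tensor_eq_zero hd (S k) (hnontriv k) (C i) hk Efam htr
  refine ⟨h, by simp [h], ?_⟩
  intro hne h0
  have hex : ∀ q, ∃ x y, Efam q x y ≠ 0 := by
    intro q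
    by_contra! hq
    exact hne q (by ext x y; exact hq x y)
  choose a b hab using hex
  have h1 : tensorOp Efam a b = 0 := by rw [h0]; rfl
  exact Finset.prod_ne_zero_iff.2 (fun q _ => hab q) h1
end

section
/- For any system with a nontrivial neighborhood structure, full-rank states are not UDA: if 𝒩 is nontrivial and ρ is a positive-definite density matrix on H, then there exists a density matrix σ ≠ ρ having the same marginals as ρ, i.e. tr((X ⊗ I_{𝒩̄_k}) σ) = tr((X ⊗ I_{𝒩̄_k}) ρ) for every neighborhood 𝒩_k ∈ 𝒩 and every operator X on H_{𝒩_k}. -/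
open Matrix
open scoped Classical ComplexOrder

theorem exists_sub_smul_one_posSemidef {n : Type*} [Fintype n] [DecidableEq n]
    (ρ : Matrix n n ℂ) (hρ : ρ.PosDef) :
    ∃ t : ℝ, 0 < t ∧ (ρ - (t : ℂ) • (1 : Matrix n n ℂ)).PosSemidef := by
  have hH := hρ.isHermitian
  obtain ⟨t, ht, hle⟩ : ∃ t : ℝ, 0 < t ∧ ∀ i, t ≤ hH.eigenvalues i := by
    rcases isEmpty_or_nonempty n with h | h
    · exact ⟨1, one_pos, fun i => h.elim i⟩
    · obtain ⟨i, hi⟩ := Finite.exists_min hH.eigenvalues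
      exact ⟨_, hρ.eigenvalues_pos i, hi⟩
  refine ⟨t, ht, ?_⟩
  let U : Matrix n n ℂ := (hH.eigenvectorUnitary : Matrix n n ℂ)
  have hU : U * Uᴴ = 1 := by
    have := Unitary.coe_mul_star_self hH.eigenvectorUnitary
    simpa [U, Matrix.star_eq_conjTranspose] using this
  have hs : ρ = U * Matrix.diagonal (fun i => (hH.eigenvalues i : ℂ)) * Uᴴ := by
    have := hH.spectral_theorem
    rw [Unitary.conjStarAlgAut_apply] at this
    exact this
  have he : ρ - (t : ℂ) • (1 : Matrix n n ℂ)
      = U * Matrix.diagonal (fun i => ((hH.eigenvalues i - t : ℝ) : ℂ)) * Uᴴ := by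
    have hd : Matrix.diagonal (fun i => ((hH.eigenvalues i - t : ℝ) : ℂ))
        = Matrix.diagonal (fun i => (hH.eigenvalues i : ℂ)) - (t : ℂ) • (1 : Matrix n n ℂ) := by
      ext i j
      by_cases h : i = j <;> simp [Matrix.diagonal, h]
    rw [hd, mul_sub, sub_mul, ← hs]
    simp [hU]
  rw [he]
  apply Matrix.PosSemidef.mul_mul_conjTranspose_same
  rw [Matrix.posSemidef_diagonal_iff]
  intro i
  exact_mod_cast sub_nonneg.2 (hle i)

theorem one_add_flip_posSemidef {n : Type*} [Fintype n] [DecidableEq n] (z o : n) (h : z ≠ o) :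
    ((1 : Matrix n n ℂ) + (Matrix.single z o 1 + Matrix.single o z 1)).PosSemidef := by
  have h1 : (1 : Matrix n n ℂ) + (Matrix.single z o 1 + Matrix.single o z 1)
      = Matrix.diagonal (fun i => if i = z ∨ i = o then (0 : ℂ) else 1)
        + Matrix.vecMulVec (Pi.single z 1 + Pi.single o 1) (star (Pi.single z 1 + Pi.single o 1)) := by
    ext i j
    simp only [Matrix.add_apply, Matrix.one_apply, Matrix.single_apply, Matrix.diagonal_apply,
      Matrix.vecMulVec_apply, Pi.add_apply, Pi.star_apply, Pi.single_apply, star_add, apply_ite (star : ℂ → ℂ), star_one, star_zero]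
    by_cases h1 : i = z <;> by_cases h2 : i = o <;> by_cases h3 : j = z <;> by_cases h4 : j = o <;>
      grind
  rw [h1]
  refine Matrix.PosSemidef.add ?_ (Matrix.posSemidef_vecMulVec_self_star _)
  rw [Matrix.posSemidef_diagonal_iff]
  intro i
  split_ifs <;> simp

/-- For any system with a nontrivial neighborhood structure, full-rank
states are not UDA: on `H = ⊗_{q=1}^N ℂ^{d_q}` (`N ≥ 2`, `d_q ≥ 2`), if no neighborhood
`S k` equals `{1,…,N}` and `ρ` is a positive-definite density matrix, then there exists a
density matrix `σ ≠ ρ` with the same marginals as `ρ`, i.e.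
`tr((X ⊗ I) σ) = tr((X ⊗ I) ρ)` for every neighborhood `S k` and every `𝒩`-local operator
`X ⊗ I` supported on `S k`. -/
theorem fullrank_states_not_UDA
    {N M : ℕ} {d : Fin N → ℕ} (hN : 2 ≤ N) (hd : ∀ q, 2 ≤ d q)
    (S : Fin M → Finset (Fin N)) (hnontriv : ∀ k, S k ≠ Finset.univ)
    (ρ : Matrix (∀ q, Fin (d q)) (∀ q, Fin (d q)) ℂ)
    (hρ : ρ.PosDef) (hρtr : ρ.trace = 1) :
    ∃ σ : Matrix (∀ q, Fin (d q)) (∀ q, Fin (d q)) ℂ,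
      σ.PosSemidef ∧ σ.trace = 1 ∧ σ ≠ ρ ∧
      ∀ (k : Fin M) (A : Matrix (∀ q, Fin (d q)) (∀ q, Fin (d q)) ℂ),
        IsLocalOp (S k) A → (A * σ).trace = (A * ρ).trace := by
  let z : ∀ q, Fin (d q) := fun q => ⟨0, by have := hd q; omega⟩
  let o : ∀ q, Fin (d q) := fun q => ⟨1, by have := hd q; omega⟩
  have hq : ∀ q, z q ≠ o q := fun q => by simp [z, o]
  have hzo : z ≠ o := fun h => hq ⟨0, by omega⟩ (congrFun h _)
  obtain ⟨t, ht, hps⟩ := exists_sub_smul_one_posSemidef ρ hρ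
  have htr : ∀ A : Matrix (∀ q, Fin (d q)) (∀ q, Fin (d q)) ℂ, A z o = 0 → A o z = 0 →
      (A * (ρ + (t : ℂ) • (Matrix.single z o 1 + Matrix.single o z 1))).trace
        = (A * ρ).trace := by
    intro A h1 h2
    simp [mul_add, Matrix.trace_add, Matrix.trace_smul, Matrix.trace_mul_single, h1, h2]
  refine ⟨ρ + (t : ℂ) • (Matrix.single z o 1 + Matrix.single o z 1), ?_, ?_, ?_, ?_⟩
  · have := hps.add ((one_add_flip_posSemidef z o hzo).smul
      (show (0 : ℂ) ≤ (t : ℂ) by exact_mod_cast ht.le))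
    convert this using 1
    rw [smul_add (t : ℂ) (1 : Matrix _ _ ℂ)]
    abel
  · have := htr 1 (by simp [hzo]) (by simp [hzo.symm])
    simpa [hρtr] using this
  · intro h
    have := congrFun (congrFun h z) o
    simp [Matrix.single_apply, hzo, hzo.symm, ht.ne'] at this
  · rintro k A ⟨X, hX⟩
    obtain ⟨q, hqS⟩ : ∃ q, q ∉ S k := by
      by_contra hc
      push Not at hc
      exact hnontriv k (Finset.eq_univ_iff_forall.2 hc)
    apply htr
    · rw [hX, if_neg (fun h => hq q (h q hqS))]
    · rw [hX, if_neg (fun h => hq q (h q hqS).symm)]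
end
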